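/- For every countable set X, every bound N ∈ ℕ, and every function g from multisets over X of cardinality at most N to a set Y, there exist a function f : X → ℝ and a function φ : ℝ → Y such that g(M) = φ( Σ_{x ∈ M} f(x) ) for every multiset M over X of cardinality at most N; i.e., any multiset function on bounded-size multisets decomposes as a univariate function of a sum of per-element features. -/

import Mathlib

theorem sum_log_primes_injective {X : Type*} (p : X → ℕ) (hp : Function.Injective p)
    (hpr : ∀ x, (p x).Prime) :
    Function.Injective (fun M : Multiset X => (M.map (fun x => Real.log (p x))).sum) := by
  have key : ∀ M : Multiset X,
      Real.exp ((M.map (fun x => Real.log (p x))).sum) = (((M.map p).prod : ℕ) : ℝ) := by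
    intro M
    induction M using Multiset.induction_on with
    | empty => simp
    | cons a s ih =>
      have : (0 : ℝ) < p a := by exact_mod_cast (hpr a).pos
      rw [Multiset.map_cons, Multiset.sum_cons, Real.exp_add, ih, Real.exp_log this,
        Multiset.map_cons, Multiset.prod_cons, Nat.cast_mul]
  have hf : ∀ M : Multiset X,
      UniqueFactorizationMonoid.normalizedFactors (M.map p).prod = M.map p := by
    intro M
    apply UniqueFactorizationMonoid.normalizedFactors_prod_of_prime
    intro q hq
    obtain ⟨x, -, rfl⟩ := Multiset.mem_map.1 hq
    exact (hpr x).prime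
  intro A B h
  have h1 : (((A.map p).prod : ℕ) : ℝ) = (((B.map p).prod : ℕ) : ℝ) := by
    rw [← key, ← key]
    exact congrArg Real.exp h
  have h2 : (A.map p).prod = (B.map p).prod := by exact_mod_cast h1
  apply Multiset.map_injective hp
  rw [← hf A, ← hf B, h2]

/-- Any multiset function `g` on bounded-size multisets over a countable set
decomposes as `g(M) = φ(Σ_{x ∈ M} f(x))` for some per-element feature map
`f : X → ℝ` and univariate readout `φ : ℝ → Y`. -/
theorem multiset_function_decomposition (X : Type*) [Countable X] (N : ℕ)
    (Y : Type*) (g : Multiset X → Y) :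
    ∃ (f : X → ℝ) (φ : ℝ → Y),
      ∀ M : Multiset X, Multiset.card M ≤ N → g M = φ ((M.map f).sum) := by
  obtain ⟨e, he⟩ := exists_injective_nat X
  have hinj := sum_log_primes_injective (fun x => Nat.nth Nat.Prime (e x))
    ((Nat.nth_injective Nat.infinite_setOf_prime).comp he) (fun x => Nat.prime_nth_prime (e x))
  refine ⟨fun x => Real.log ((Nat.nth Nat.Prime (e x) : ℕ) : ℝ),
    fun r => g (Function.invFun (fun M : Multiset X =>
      (M.map (fun x => Real.log ((Nat.nth Nat.Prime (e x) : ℕ) : ℝ))).sum) r), ?_⟩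
  intro M _
  exact congrArg g (Function.leftInverse_invFun hinj M).symm
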